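/- arXiv:1806.09859 — 2 statements merged into one kernel-verified Lean document; each statement's English description precedes it below -/
import Mathlib

section
/- Let α > 0, σ > 0, h > 0, P_peak > 0, ξ > 0, and λ ∈ [0, 1]. The function f(s) = (1−λ) · (α/2) · log₂(1 + 2 s h/(α σ²)) − ξ s attains its maximum over the interval [0, (α/2) P_peak] at the point s* = (α/2) · min{ max( (1−λ)/(ξ ln 2) − σ²/h, 0 ), P_peak }. -/
/-!
Up to the positive factor `ξ` and an additive constant, the objective is `a * log x - x` in the
shifted variable `x = c + s`. On `(0, ∞)` this function increases up to `x = a` and decreases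
afterwards (it only decreases if `a ≤ 0`), so on an interval it is maximal at the point closest
to `a`; shifting back by `c` gives the water-filling formula.
-/

open Set Real

theorem min_max_mem_Icc {ι : Type*} [LinearOrder ι] {l u : ι} (hlu : l ≤ u) (m : ι) :
    min (max m l) u ∈ Icc l u :=
  ⟨le_min (le_max_right _ _) hlu, min_le_right _ _⟩

theorem isMaxOn_Icc_of_monotoneOn_of_antitoneOn {ι β : Type*} [LinearOrder ι] [Preorder β]
    {f : ι → β} {l u m : ι} (hmono : MonotoneOn f (Icc l u ∩ Iic m))
    (hanti : AntitoneOn f (Icc l u ∩ Ici m)) :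
    IsMaxOn f (Icc l u) (min (max m l) u) := by
  intro x hx
  have hmem := min_max_mem_Icc (hx.1.trans hx.2) m
  rcases le_total x m with hxm | hmx
  · have hclamp : min (max m l) u ≤ m :=
      (min_le_left _ _).trans (max_le le_rfl (hx.1.trans hxm))
    exact hmono ⟨hx, hxm⟩ ⟨hmem, hclamp⟩ (le_min (hxm.trans (le_max_left _ _)) hx.2)
  · have hclamp : m ≤ min (max m l) u := le_min (le_max_left _ _) (hmx.trans hx.2)
    exact hanti ⟨hmem, hclamp⟩ ⟨hx, hmx⟩ ((min_le_left _ _).trans (max_le hmx hx.1))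

theorem monotoneOn_mul_log_sub (a : ℝ) :
    MonotoneOn (fun x => a * log x - x) (Ioc 0 a) := by
  rintro x ⟨hx, -⟩ y ⟨hy, hya⟩ hxy
  have hlog : 0 ≤ log y - log x := sub_nonneg.2 (log_le_log hx hxy)
  have hlower : y - x ≤ y * (log y - log x) := by
    have htangent := one_sub_inv_le_log_of_pos (div_pos hy hx)
    rw [log_div hy.ne' hx.ne', inv_div] at htangent
    calc y - x = y * (1 - x / y) := by field_simp
      _ ≤ y * (log y - log x) := by gcongr
  have hscale : y * (log y - log x) ≤ a * (log y - log x) := by gcongr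
  dsimp only
  linarith

theorem antitoneOn_mul_log_sub (a : ℝ) :
    AntitoneOn (fun x => a * log x - x) (Ioi 0 ∩ Ici a) := by
  rintro x ⟨hx : 0 < x, hax : a ≤ x⟩ y ⟨hy : 0 < y, -⟩ hxy
  have hlog : 0 ≤ log y - log x := sub_nonneg.2 (log_le_log hx hxy)
  have hupper : x * (log y - log x) ≤ y - x := by
    have htangent := log_le_sub_one_of_pos (div_pos hy hx)
    rw [log_div hy.ne' hx.ne'] at htangent
    calc x * (log y - log x) ≤ x * (y / x - 1) := by gcongr
      _ = y - x := by field_simp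
  have hscale : a * (log y - log x) ≤ x * (log y - log x) := by gcongr
  dsimp only
  linarith

theorem isMaxOn_mul_log_sub (a u : ℝ) {l : ℝ} (hl : 0 < l) :
    IsMaxOn (fun x => a * log x - x) (Icc l u) (min (max a l) u) :=
  isMaxOn_Icc_of_monotoneOn_of_antitoneOn
    ((monotoneOn_mul_log_sub a).mono fun _ hx => ⟨hl.trans_le hx.1.1, hx.2⟩)
    ((antitoneOn_mul_log_sub a).mono fun _ hx => ⟨hl.trans_le hx.1.1, hx.2⟩)

theorem isMaxOn_mul_log_one_add_div_sub (a : ℝ) {c u : ℝ} (hc : 0 < c) (hu : 0 ≤ u) :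
    IsMaxOn (fun s => a * log (1 + s / c) - s) (Icc 0 u) (min (max (a - c) 0) u) := by
  have hshift : ∀ s ∈ Icc 0 u,
      a * log (1 + s / c) - s = a * log (c + s) - (c + s) + (c - a * log c) := by
    intro s hs
    have hcs : 0 < c + s := add_pos_of_pos_of_nonneg hc hs.1
    rw [one_add_div hc.ne', log_div hcs.ne' hc.ne']
    ring
  have hclamp : c + min (max (a - c) 0) u = min (max a c) (c + u) := by
    rw [← min_add_add_left, ← max_add_add_left, add_sub_cancel, add_zero]
  intro s hs
  have hcs : c + s ∈ Icc c (c + u) := ⟨le_add_of_nonneg_right hs.1, add_le_add_right hs.2 c⟩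
  change a * log (1 + s / c) - s ≤ a * log (1 + _ / c) - _
  rw [hshift s hs, hshift _ (min_max_mem_Icc hu _), hclamp]
  exact add_le_add_left (isMaxOn_mul_log_sub a (c + u) hc hcs) _

theorem stmt_4_general (α σ h Ppeak ξ lam : ℝ) (hα : 0 < α) (hσ : σ ≠ 0) (hh : 0 < h)
    (hPpeak : 0 ≤ Ppeak) (hξ : 0 < ξ) :
    let f : ℝ → ℝ := fun s =>
      (1 - lam) * (α / 2) * Real.logb 2 (1 + 2 * s * h / (α * σ ^ 2)) - ξ * s
    let sStar : ℝ := (α / 2) * min (max ((1 - lam) / (ξ * Real.log 2) - σ ^ 2 / h) 0) Ppeak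
    sStar ∈ Set.Icc (0 : ℝ) ((α / 2) * Ppeak) ∧
      IsMaxOn f (Set.Icc (0 : ℝ) ((α / 2) * Ppeak)) sStar := by
  intro f sStar
  have hα2 : 0 ≤ α / 2 := by positivity
  have hu : 0 ≤ α / 2 * Ppeak := by positivity
  set a := α / 2 * ((1 - lam) / (ξ * log 2)) with ha
  set c := α / 2 * (σ ^ 2 / h) with hc
  have hc_pos : 0 < c := by positivity
  have hsStar : sStar = min (max (a - c) 0) (α / 2 * Ppeak) := by
    simp only [sStar, ha, hc, mul_min_of_nonneg _ _ hα2, mul_max_of_nonneg _ _ hα2, mul_sub,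
      mul_zero]
  have hf : f = fun s => ξ * (a * log (1 + s / c) - s) := by
    funext s
    have hsnr : 2 * s * h / (α * σ ^ 2) = s / c := by
      rw [hc]
      field_simp
    simp only [f, hsnr, logb, ha]
    field_simp
  rw [hsStar, hf]
  exact ⟨min_max_mem_Icc hu _,
    (isMaxOn_mul_log_one_add_div_sub a hc_pos hu).comp_mono (monotone_mul_left_of_nonneg hξ.le)⟩

/-- Closed-form maximizer of the per-pair Lagrangian term for the relay transmit energy
(equation (36), case `k = K`) in the TDMA problem:
`f s = (1−λ) (α/2) log₂(1 + 2 s h/(α σ²)) − ξ s` is maximized over `[0, (α/2) P_peak]` at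
`s* = (α/2) · min (max ((1−λ)/(ξ ln 2) − σ²/h) 0) P_peak`. -/
theorem stmt_4 (α σ h Ppeak ξ lam : ℝ) (hα : 0 < α) (hσ : 0 < σ) (hh : 0 < h)
    (hPpeak : 0 < Ppeak) (hξ : 0 < ξ) (hlam0 : 0 ≤ lam) (hlam1 : lam ≤ 1) :
    let f : ℝ → ℝ := fun s =>
      (1 - lam) * (α / 2) * Real.logb 2 (1 + 2 * s * h / (α * σ ^ 2)) - ξ * s
    let sStar : ℝ := (α / 2) * min (max ((1 - lam) / (ξ * Real.log 2) - σ ^ 2 / h) 0) Ppeak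
    sStar ∈ Set.Icc (0 : ℝ) ((α / 2) * Ppeak) ∧
      IsMaxOn f (Set.Icc (0 : ℝ) ((α / 2) * Ppeak)) sStar :=
  stmt_4_general α σ h Ppeak ξ lam hα hσ.ne' hh hPpeak.le hξ
end

section
/- Proposition 3. Let K ≥ 1, σ > 0, α₀ ∈ [0, 1), and A₁, …, A_K > 0. The maximum of Σ_{k=1}^K (α_k/2) · log₂(1 + 2 A_k/(α_k σ²)) over all α₁, …, α_K ≥ 0 with Σ_{k=1}^K α_k ≤ 1 − α₀ (with the k-th summand interpreted as 0 when α_k = 0) is attained at α_k* = A_k · (1 − α₀) / (Σ_{j=1}^K A_j), and the maximum value equals ((1 − α₀)/2) · log₂(1 + 2 (Σ_{j=1}^K A_j)/((1 − α₀) σ²)). -/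
/-!
With `t = α / 2` and `x = A / σ²`, a first-hop rate is `t log₂(1 + x / t)`, the perspective of
the concave function `y ↦ log₂(1 + y)`. Jensen's inequality bounds a sum of perspectives by the
perspective of the sums; the time left unallocated is a further weight, placed at the point `0`.
Equality holds when all ratios `x / t` agree, that is, when the time is allocated proportionally
to `A`.
-/

open Set Real

section Perspective

variable {𝕜 E β ι : Type*} [Field 𝕜] [AddCommGroup E] [AddCommGroup β] [Module 𝕜 E] [Module 𝕜 β]

/-- The perspective `(t, x) ↦ t f(x / t)` of `f`, as a function of a scale `t` and a vector `x`.
It takes the value `0` at `t = 0`, the convention for an unused time slot. -/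
def perspective (f : E → β) (t : 𝕜) (x : E) : β := t • f (t⁻¹ • x)

theorem perspective_zero_left (f : E → β) (x : E) : perspective f (0 : 𝕜) x = 0 :=
  zero_smul 𝕜 _

theorem perspective_smul_right (f : E → β) (t : 𝕜) (y : E) :
    perspective f t (t • y) = t • f y := by
  rcases eq_or_ne t 0 with rfl | ht
  · rw [perspective_zero_left, zero_smul]
  · rw [perspective, inv_smul_smul₀ ht]

theorem sum_perspective_smul_right (s : Finset ι) (f : E → β) (t : ι → 𝕜) (y : E) :
    ∑ i ∈ s, perspective f (t i) (t i • y) =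
      perspective f (∑ i ∈ s, t i) ((∑ i ∈ s, t i) • y) := by
  simp only [perspective_smul_right, ← Finset.sum_smul]

theorem smul_inv_smul_le_self [Preorder E] (t : 𝕜) {x : E} (hx : 0 ≤ x) : t • t⁻¹ • x ≤ x := by
  rcases eq_or_ne t 0 with rfl | ht
  · rwa [zero_smul]
  · rw [smul_inv_smul₀ ht]

variable [LinearOrder 𝕜] [IsStrictOrderedRing 𝕜]
  [PartialOrder β] [IsOrderedAddMonoid β] [IsStrictOrderedModule 𝕜 β]

theorem sum_smul_le_map_sum_smul_of_sum_le_one {s : Finset ι} {C : Set E} {f : E → β}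
    (hf : ConcaveOn 𝕜 C f) (hC : 0 ∈ C) (hf₀ : 0 ≤ f 0) {w : ι → 𝕜} (hw : ∀ i ∈ s, 0 ≤ w i)
    (hw₁ : ∑ i ∈ s, w i ≤ 1) {p : ι → E} (hp : ∀ i ∈ s, p i ∈ C) :
    ∑ i ∈ s, w i • f (p i) ≤ f (∑ i ∈ s, w i • p i) := by
  have hrest : 0 ≤ 1 - ∑ i ∈ s, w i := sub_nonneg.2 hw₁
  calc ∑ i ∈ s, w i • f (p i)
      ≤ (1 - ∑ i ∈ s, w i) • f 0 + ∑ i ∈ s, w i • f (p i) :=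
        le_add_of_nonneg_left (smul_nonneg hrest hf₀)
    _ ≤ f ((1 - ∑ i ∈ s, w i) • 0 + ∑ i ∈ s, w i • p i) :=
        hf.map_add_sum_le hw (sub_add_cancel _ _) hp hrest hC
    _ = f (∑ i ∈ s, w i • p i) := by rw [smul_zero, zero_add]

theorem sum_perspective_le [PartialOrder E] [IsOrderedAddMonoid E] [PosSMulMono 𝕜 E]
    {s : Finset ι} {f : E → β} (hf : ConcaveOn 𝕜 (Ici 0) f)
    (hmono : MonotoneOn f (Ici 0)) (hf₀ : 0 ≤ f 0)
    {t : ι → 𝕜} (ht : ∀ i ∈ s, 0 ≤ t i) {x : ι → E} (hx : ∀ i ∈ s, 0 ≤ x i)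
    {T : 𝕜} (hT : 0 < T) (htT : ∑ i ∈ s, t i ≤ T) :
    ∑ i ∈ s, perspective f (t i) (x i) ≤ perspective f T (∑ i ∈ s, x i) := by
  have hT' : 0 ≤ T⁻¹ := (inv_pos.2 hT).le
  have hw : ∀ i ∈ s, 0 ≤ T⁻¹ * t i := fun i hi => mul_nonneg hT' (ht i hi)
  have hw₁ : ∑ i ∈ s, T⁻¹ * t i ≤ 1 := by
    rw [← Finset.mul_sum]
    exact inv_mul_le_one_of_le₀ htT hT.le
  have hp : ∀ i ∈ s, 0 ≤ (t i)⁻¹ • x i := fun i hi =>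
    smul_nonneg (inv_nonneg.2 (ht i hi)) (hx i hi)
  -- Indices with `t i = 0` lose their `x i` here, so only `≤` holds and `f` has to be monotone.
  have hmean : ∑ i ∈ s, (T⁻¹ * t i) • (t i)⁻¹ • x i ≤ T⁻¹ • ∑ i ∈ s, x i := by
    simp only [mul_smul, ← Finset.smul_sum]
    gcongr with i hi
    exact smul_inv_smul_le_self (t i) (hx i hi)
  have hmean₀ : 0 ≤ ∑ i ∈ s, (T⁻¹ * t i) • (t i)⁻¹ • x i :=
    Finset.sum_nonneg fun i hi => smul_nonneg (hw i hi) (hp i hi)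
  calc ∑ i ∈ s, t i • f ((t i)⁻¹ • x i)
      = T • ∑ i ∈ s, (T⁻¹ * t i) • f ((t i)⁻¹ • x i) := by
        simp only [mul_smul, ← Finset.smul_sum, smul_inv_smul₀ hT.ne']
    _ ≤ T • f (∑ i ∈ s, (T⁻¹ * t i) • (t i)⁻¹ • x i) := by
        gcongr
        exact sum_smul_le_map_sum_smul_of_sum_le_one hf self_mem_Ici hf₀ hw hw₁ hp
    _ ≤ T • f (T⁻¹ • ∑ i ∈ s, x i) := by
        gcongr
        exact hmono hmean₀ (hmean₀.trans hmean) hmean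

end Perspective

section LogbOneAdd

variable {b : ℝ}

theorem concaveOn_logb_one_add (hb : 1 < b) :
    ConcaveOn ℝ (Ioi (-1)) fun y => logb b (1 + y) := by
  have hlog : ConcaveOn ℝ (Ioi (-1)) fun y => log (1 + y) := by
    simpa [Function.comp_def] using strictConcaveOn_log_Ioi.concaveOn.translate_right 1
  simpa [logb, div_eq_inv_mul] using hlog.smul (inv_pos.2 (log_pos hb)).le

theorem monotoneOn_logb_one_add (hb : 1 < b) :
    MonotoneOn (fun y => logb b (1 + y)) (Ioi (-1)) := fun _ hy _ _ hyz =>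
  logb_le_logb_of_le hb (by linarith [mem_Ioi.1 hy]) (by gcongr)

end LogbOneAdd

section FirstHopRate

/-- The first-hop rate `(a / 2) log₂(1 + 2 x / (a σ²))` of a source with time allocation `a` and
effective first-hop quantity `x` at noise power `σ²`, interpreted as `0` when `a = 0`. -/
noncomputable def firstHopRate (σ a x : ℝ) : ℝ :=
  if a = 0 then 0 else (a / 2) * logb 2 (1 + 2 * x / (a * σ ^ 2))

variable {ι : Type*}

theorem firstHopRate_eq_perspective (σ a x : ℝ) :
    firstHopRate σ a x = perspective (fun y => logb 2 (1 + y)) (a / 2) (x / σ ^ 2) := by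
  rcases eq_or_ne a 0 with rfl | ha
  · rw [firstHopRate, if_pos rfl, zero_div, perspective_zero_left]
  · have hsnr : 2 * x / (a * σ ^ 2) = (a / 2)⁻¹ * (x / σ ^ 2) := by
      rw [inv_div, div_mul_div_comm]
    rw [firstHopRate, if_neg ha, hsnr, perspective, smul_eq_mul, smul_eq_mul]

theorem sum_firstHopRate_le (σ : ℝ) {s : Finset ι} {a : ι → ℝ} (ha : ∀ k ∈ s, 0 ≤ a k)
    {A : ι → ℝ} (hA : ∀ k ∈ s, 0 ≤ A k) {T : ℝ} (hT : 0 < T) (haT : ∑ k ∈ s, a k ≤ T) :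
    ∑ k ∈ s, firstHopRate σ (a k) (A k) ≤ firstHopRate σ T (∑ k ∈ s, A k) := by
  simp only [firstHopRate_eq_perspective, Finset.sum_div]
  have hsub : Ici (0 : ℝ) ⊆ Ioi (-1) := Ici_subset_Ioi.2 neg_one_lt_zero
  refine sum_perspective_le ((concaveOn_logb_one_add one_lt_two).subset hsub (convex_Ici 0))
    ((monotoneOn_logb_one_add one_lt_two).mono hsub) (by simp)
    (fun k hk => div_nonneg (ha k hk) zero_le_two) (fun k hk => div_nonneg (hA k hk) (sq_nonneg σ))
    (half_pos hT) ?_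
  rw [← Finset.sum_div]
  gcongr

theorem sum_firstHopRate_mul_right (σ : ℝ) (s : Finset ι) (a : ι → ℝ) (c : ℝ) :
    ∑ k ∈ s, firstHopRate σ (a k) (a k * c) =
      firstHopRate σ (∑ k ∈ s, a k) ((∑ k ∈ s, a k) * c) := by
  have hscale (a : ℝ) : a * c / σ ^ 2 = (a / 2) • (c * 2 / σ ^ 2) := by
    rw [smul_eq_mul]
    ring
  simp only [firstHopRate_eq_perspective, hscale, sum_perspective_smul_right, Finset.sum_div]

end FirstHopRate

theorem stmt_7_general {ι : Type*} [Fintype ι] {σ α₀ : ℝ} (_hσ : σ ≠ 0) (hα₀ : α₀ < 1)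
    {A : ι → ℝ} (hA : ∀ k, 0 ≤ A k) (hS : 0 < ∑ k, A k) :
    let αStar : ι → ℝ := fun k => A k * (1 - α₀) / (∑ j, A j)
    let V : ℝ := ((1 - α₀) / 2) * logb 2 (1 + 2 * (∑ j, A j) / ((1 - α₀) * σ ^ 2))
    (∀ k, 0 ≤ αStar k) ∧ (∑ k, αStar k) ≤ 1 - α₀ ∧
    (∑ k, firstHopRate σ (αStar k) (A k)) = V ∧
    (∀ α : ι → ℝ, (∀ k, 0 ≤ α k) → (∑ k, α k) ≤ 1 - α₀ →
      (∑ k, firstHopRate σ (α k) (A k)) ≤ V) := by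
  intro αStar V
  have hT : 0 < 1 - α₀ := sub_pos.2 hα₀
  have hV : firstHopRate σ (1 - α₀) (∑ k, A k) = V := if_neg hT.ne'
  have hsum : ∑ k, αStar k = 1 - α₀ := by
    rw [← Finset.sum_div, ← Finset.sum_mul, mul_div_cancel_left₀ _ hS.ne']
  have hratio (k : ι) : αStar k * ((∑ j, A j) / (1 - α₀)) = A k := by
    simp only [αStar]
    field_simp
  refine ⟨fun k => div_nonneg (mul_nonneg (hA k) hT.le) hS.le, hsum.le, ?_, fun α hα hαT => ?_⟩
  · have hrates := sum_firstHopRate_mul_right σ Finset.univ αStar ((∑ j, A j) / (1 - α₀))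
    simpa only [hratio, hsum, mul_div_cancel₀ _ hT.ne', hV] using hrates
  · exact hV ▸ sum_firstHopRate_le σ (fun k _ => hα k) (fun k _ => hA k) hT hαT

/-- Proposition 3: the sum of first-hop rates `Σ (α_k/2) log₂(1 + 2 A_k/(α_k σ²))`
(the `k`-th summand interpreted as `0` when `α_k = 0`) over `α_k ≥ 0` with
`Σ α_k ≤ 1 − α₀` is maximized at `α_k* = A_k (1 − α₀) / Σ_j A_j`, with maximum value
`((1 − α₀)/2) log₂(1 + 2 (Σ_j A_j)/((1 − α₀) σ²))`. -/
theorem stmt_7 (K : ℕ) (hK : 1 ≤ K) (σ α₀ : ℝ) (hσ : 0 < σ)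
    (hα₀0 : 0 ≤ α₀) (hα₀1 : α₀ < 1) (A : Fin K → ℝ) (hA : ∀ k, 0 < A k) :
    let R : ℝ → ℝ → ℝ := fun a Ak =>
      if a = 0 then 0 else (a / 2) * Real.logb 2 (1 + 2 * Ak / (a * σ ^ 2))
    let αStar : Fin K → ℝ := fun k => A k * (1 - α₀) / (∑ j, A j)
    let V : ℝ := ((1 - α₀) / 2) * Real.logb 2 (1 + 2 * (∑ j, A j) / ((1 - α₀) * σ ^ 2))
    (∀ k, 0 ≤ αStar k) ∧ (∑ k, αStar k) ≤ 1 - α₀ ∧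
    (∑ k, R (αStar k) (A k)) = V ∧
    (∀ α : Fin K → ℝ, (∀ k, 0 ≤ α k) → (∑ k, α k) ≤ 1 - α₀ →
      (∑ k, R (α k) (A k)) ≤ V) :=
  stmt_7_general hσ.ne' hα₀1 (fun k => (hA k).le)
    (Finset.sum_pos (fun k _ => hA k) (Finset.univ_nonempty_iff.2 ⟨⟨0, hK⟩⟩))
end
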